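/- arXiv:quant-ph/0001108 — 5 statements merged into one kernel-verified Lean document; each statement's English description precedes it below -/
import Mathlib

section
/- Let $V$ be a finite-dimensional nonzero complex vector space with a direct sum decomposition $V = W_0 \oplus W_1 \oplus \cdots \oplus W_{n-1}$ (the subspaces $W_i$ are independent and span $V$), and let $T : V \to V$ be a linear automorphism such that $T(W_i) = W_{i+1 \bmod n}$ for all $i$. Then for every eigenvalue $\mu$ of $T$ and every complex number $\zeta$ with $\zeta^n = 1$, the product $\zeta\mu$ is also an eigenvalue of $T$. -/
/-!
Let `S` be the automorphism of `V` acting on `W i` as the scalar `ζ ^ i`; since `ζ ^ n = 1`, the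
exponent only matters modulo `n`. As `T` raises the index by one, `S ∘ T = ζ • T ∘ S`, so `ζ • T`
is conjugate to `T`, and `S⁻¹` carries a `μ`-eigenvector of `T` to a `ζ * μ`-eigenvector.
-/

section BlockScaling

variable {ι R M : Type*} [DecidableEq ι] [CommRing R] [AddCommGroup M] [Module R M]
  {W : ι → Submodule R M} (hindep : iSupIndep W) (hspan : ⨆ i, W i = ⊤)

/-- The automorphism of `M = ⨁ i, W i` acting on each summand `W i` as multiplication by `c i`. If
`c (σ i) = ζ * c i`, it conjugates an endomorphism `T` sending each `W i` into `W (σ i)` to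
`ζ • T`. -/
noncomputable def blockScaling (c : ι → Rˣ) : M ≃ₗ[R] M :=
  (hindep.linearEquiv hspan).symm ≪≫ₗ
    DFinsupp.mapRange.linearEquiv (fun i => LinearEquiv.smulOfUnit (c i)) ≪≫ₗ
      hindep.linearEquiv hspan

theorem blockScaling_apply_of_mem (c : ι → Rˣ) {i : ι} {x : M} (hx : x ∈ W i) :
    blockScaling hindep hspan c x = (c i : R) • x := by
  simp [blockScaling, iSupIndep.linearEquiv_symm_apply hindep hspan hx, LinearEquiv.smulOfUnit,
    Units.smul_def]

theorem blockScaling_comp_of_map_le {c : ι → Rˣ} {σ : ι → ι} {ζ : R}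
    (hc : ∀ i, (c (σ i) : R) = ζ * c i) {T : Module.End R M} (hT : ∀ i, (W i).map T ≤ W (σ i)) :
    (blockScaling hindep hspan c : M →ₗ[R] M) ∘ₗ T =
      ζ • T ∘ₗ (blockScaling hindep hspan c : M →ₗ[R] M) := by
  ext x
  have hx : x ∈ ⨆ i, W i := hspan ▸ Submodule.mem_top
  induction hx using Submodule.iSup_induction' with
  | zero => simp only [map_zero]
  | add x y _ _ ihx ihy => rw [map_add, map_add, ihx, ihy]
  | mem i x hx =>
    have hTx : T x ∈ W (σ i) := hT i (Submodule.mem_map_of_mem hx)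
    simp [blockScaling_apply_of_mem hindep hspan c hx,
      blockScaling_apply_of_mem hindep hspan c hTx, hc, mul_smul]

end BlockScaling

section Eigenvalue

variable {R M : Type*} [CommRing R] [AddCommGroup M] [Module R M]

theorem hasEigenvalue_mul_of_comp_eq_smul_comp {T : Module.End R M} {S : M ≃ₗ[R] M} {ζ μ : R}
    (hST : (S : M →ₗ[R] M) ∘ₗ T = ζ • T ∘ₗ (S : M →ₗ[R] M)) (hμ : T.HasEigenvalue μ) :
    T.HasEigenvalue (ζ * μ) := by
  obtain ⟨v, hv⟩ := hμ.exists_hasEigenvector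
  have hT_symm : T (S.symm v) = (ζ * μ) • S.symm v := by
    apply S.injective
    calc S (T (S.symm v)) = ζ • T (S (S.symm v)) := LinearMap.congr_fun hST (S.symm v)
      _ = (ζ * μ) • v := by rw [S.apply_symm_apply, hv.apply_eq_smul, mul_smul]
      _ = S ((ζ * μ) • S.symm v) := by rw [map_smul, S.apply_symm_apply]
  exact Module.End.hasEigenvalue_of_hasEigenvector
    ⟨Module.End.mem_eigenspace_iff.mpr hT_symm, S.symm.map_ne_zero_iff.mpr hv.2⟩

theorem hasEigenvalue_mul_of_map_le {ι : Type*} {W : ι → Submodule R M} (hindep : iSupIndep W)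
    (hspan : ⨆ i, W i = ⊤) {c : ι → Rˣ} {σ : ι → ι} {ζ : R} (hc : ∀ i, (c (σ i) : R) = ζ * c i)
    {T : Module.End R M} (hT : ∀ i, (W i).map T ≤ W (σ i)) {μ : R} (hμ : T.HasEigenvalue μ) :
    T.HasEigenvalue (ζ * μ) := by
  classical
  exact hasEigenvalue_mul_of_comp_eq_smul_comp (blockScaling_comp_of_map_le hindep hspan hc hT) hμ

end Eigenvalue

theorem pow_val_add_one_of_pow_eq_one {G : Type*} [Monoid G] {n : ℕ} [NeZero n] {ζ : G}
    (hζ : ζ ^ n = 1) (i : Fin n) : ζ ^ ((i + 1 : Fin n) : ℕ) = ζ * ζ ^ (i : ℕ) := by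
  rw [Fin.val_add, Fin.val_one', Nat.add_mod_mod, ← pow_eq_pow_mod _ hζ, pow_succ']

theorem stmt_0_general {R M : Type*} [CommRing R] [AddCommGroup M] [Module R M]
    {n : ℕ} [NeZero n] {W : Fin n → Submodule R M}
    (hindep : iSupIndep W) (hspan : ⨆ i, W i = ⊤)
    {T : Module.End R M} (hT : ∀ i : Fin n, (W i).map T ≤ W (i + 1))
    {μ : R} (hμ : T.HasEigenvalue μ) {ζ : R} (hζ : ζ ^ n = 1) :
    T.HasEigenvalue (ζ * μ) := by
  let u : Rˣ := Units.ofPowEqOne ζ n hζ (NeZero.ne n)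
  have hu (i : Fin n) : ((u ^ ((i + 1 : Fin n) : ℕ) : Rˣ) : R) = ζ * (u ^ (i : ℕ) : Rˣ) := by
    rw [pow_val_add_one_of_pow_eq_one (Units.pow_ofPowEqOne hζ _) i, Units.val_mul,
      Units.val_ofPowEqOne]
  exact hasEigenvalue_mul_of_map_le (c := fun i => u ^ (i : ℕ)) hindep hspan hu hT hμ

/-- If `V = W₀ ⊕ ⋯ ⊕ W_{n-1}` is a direct sum decomposition of a nonzero
finite-dimensional complex vector space and `T` is a linear automorphism with
`T(Wᵢ) = W_{i+1 mod n}`, then the eigenvalue set of `T` is invariant under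
multiplication by `n`-th roots of unity. -/
theorem stmt_0 {V : Type*} [AddCommGroup V] [Module ℂ V] [FiniteDimensional ℂ V]
    [Nontrivial V] {n : ℕ} [NeZero n] (W : Fin n → Submodule ℂ V)
    (hindep : iSupIndep W) (hspan : ⨆ i, W i = ⊤)
    (T : V ≃ₗ[ℂ] V)
    (hT : ∀ i : Fin n, (W i).map (T : V →ₗ[ℂ] V) = W (i + 1))
    (μ : ℂ) (hμ : Module.End.HasEigenvalue (T : V →ₗ[ℂ] V) μ)
    (ζ : ℂ) (hζ : ζ ^ n = 1) :
    Module.End.HasEigenvalue (T : V →ₗ[ℂ] V) (ζ * μ) :=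
  stmt_0_general hindep hspan (fun i => (hT i).le) hμ hζ
end

section
/- Let $V$ be a finite-dimensional complex vector space with a direct sum decomposition $V = W_0 \oplus W_1 \oplus \cdots \oplus W_{n-1}$ into $n \geq 3$ nonzero subspaces, and let $T : V \to V$ be a linear automorphism with $T(W_i) = W_{i+1 \bmod n}$ for all $i$. Then $T$ has at least three distinct eigenvalues. -/
/-!
The map `T ^ n` preserves `W i`, so it has an eigenvector `w ∈ W i`, say `T ^ n w = μ w` with
`μ ≠ 0`. The vectors `w, T w, …, T ^ (n - 1) w` lie in distinct `W j`, hence are linearly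
independent. For each root `a` of `X ^ n - μ = (X - a) q`, the vector `q(T) w` is therefore nonzero,
and it is killed by `T - a`. So all `n` distinct `n`-th roots of `μ` are eigenvalues of `T`.
-/

open Module.End Polynomial

section CyclicVector

variable {K V : Type*} [Field K] [AddCommGroup V] [Module K V] {T : Module.End K V} {w : V} {n : ℕ}

lemma aeval_apply_ne_zero_of_linearIndependent
    (hw : LinearIndependent K fun k : Fin n ↦ (T ^ (k : ℕ)) w)
    {q : K[X]} (hq : q ≠ 0) (hqn : q.natDegree < n) : aeval T q w ≠ 0 := by
  intro hqw
  have hsum : ∑ k : Fin n, q.coeff k • (T ^ (k : ℕ)) w = 0 := by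
    rw [Fin.sum_univ_eq_sum_range fun k ↦ q.coeff k • (T ^ k) w, ← hqw, aeval_eq_sum_range' hqn]
    simp only [LinearMap.sum_apply, LinearMap.smul_apply]
  exact hq <| leadingCoeff_eq_zero.mp <|
    Fintype.linearIndependent_iff.mp hw (fun k ↦ q.coeff k) hsum ⟨q.natDegree, hqn⟩

lemma hasEigenvalue_of_isRoot_of_aeval_apply_eq_zero
    (hw : LinearIndependent K fun k : Fin n ↦ (T ^ (k : ℕ)) w)
    {p : K[X]} (hp : p ≠ 0) (hpn : p.natDegree ≤ n) (hpw : aeval T p w = 0)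
    {a : K} (ha : p.IsRoot a) : T.HasEigenvalue a := by
  obtain ⟨q, rfl⟩ := dvd_iff_isRoot.mpr ha
  have hq : q ≠ 0 := right_ne_zero_of_mul hp
  have hqn : q.natDegree < n := by
    rw [natDegree_mul (X_sub_C_ne_zero a) hq, natDegree_X_sub_C] at hpn
    lia
  have hTq : T (aeval T q w) = a • aeval T q w := by simpa [sub_eq_zero] using hpw
  exact hasEigenvalue_of_hasEigenvector
    ⟨mem_eigenspace_iff.mpr hTq, aeval_apply_ne_zero_of_linearIndependent hw hq hqn⟩

end CyclicVector

lemma exists_hasEigenvector_mem {K V : Type*} [Field K] [IsAlgClosed K] [AddCommGroup V]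
    [Module K V] {f : Module.End K V} {p : Submodule K V} [FiniteDimensional K p]
    (hp : p ≠ ⊥) (hf : ∀ x ∈ p, f x ∈ p) : ∃ μ, ∃ w ∈ p, f.HasEigenvector μ w := by
  have : Nontrivial p := Submodule.nontrivial_iff_ne_bot.mpr hp
  obtain ⟨μ, hμ⟩ := exists_eigenvalue (f.restrict hf)
  obtain ⟨w, hw⟩ := hμ.exists_hasEigenvector
  exact ⟨μ, w, w.2, eigenspace_restrict_le_eigenspace f hf μ ⟨w, hw.1, rfl⟩, by simpa using hw.2⟩

lemma exists_finset_card_eq_forall_pow_eq {K : Type*} [Field K] [IsAlgClosed K] {n : ℕ}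
    (hn : (n : K) ≠ 0) {μ : K} (hμ : μ ≠ 0) :
    ∃ s : Finset K, s.card = n ∧ ∀ a ∈ s, a ^ n = μ := by
  classical
  refine ⟨(X ^ n - C μ).rootSet K |>.toFinset, ?_, ?_⟩
  · rw [Set.toFinset_card, card_rootSet_eq_natDegree (separable_X_pow_sub_C μ hn hμ)
      (IsAlgClosed.splits _), natDegree_X_pow_sub_C]
  · intro a ha
    simpa [sub_eq_zero] using aeval_eq_zero_of_mem_rootSet (Set.mem_toFinset.mp ha)

section CyclicShift

lemma pow_apply_mem_of_map_le {ι R V : Type*} [AddMonoidWithOne ι] [Semiring R]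
    [AddCommMonoid V] [Module R V] {W : ι → Submodule R V} {T : Module.End R V}
    (hT : ∀ i, (W i).map T ≤ W (i + 1)) {i : ι} {w : V} (hw : w ∈ W i) (k : ℕ) :
    (T ^ k) w ∈ W (i + k) := by
  induction k with
  | zero => simpa using hw
  | succ k ih =>
    rw [pow_succ', Nat.cast_succ, ← add_assoc]
    exact hT _ (Submodule.mem_map_of_mem ih)

variable {ι K V : Type*} [AddGroupWithOne ι] [Field K] [AddCommGroup V] [Module K V]
  {W : ι → Submodule K V} {T : Module.End K V} {n : ℕ} [CharP ι n] {i : ι}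

lemma linearIndependent_pow_apply_of_iSupIndep (hW : iSupIndep W)
    (hT : ∀ i, (W i).map T ≤ W (i + 1)) (hinj : Function.Injective T)
    {w : V} (hw : w ∈ W i) (hw₀ : w ≠ 0) :
    LinearIndependent K fun k : Fin n ↦ (T ^ (k : ℕ)) w := by
  have hindex : Function.Injective fun k : Fin n ↦ i + ((k : ℕ) : ι) := fun j k hjk ↦
    Fin.ext <| CharP.natCast_injOn_Iio ι n j.2 k.2 (add_left_cancel hjk)
  refine (hW.comp hindex).linearIndependent _ (fun k ↦ pow_apply_mem_of_map_le hT hw k) fun k ↦ ?_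
  rw [Module.End.coe_pow]
  exact (hinj.iterate k).ne_iff' (iterate_map_zero T k) |>.mpr hw₀

lemma exists_ne_zero_forall_pow_eq_hasEigenvalue [IsAlgClosed K]
    (hn : n ≠ 0) (hW : iSupIndep W) [FiniteDimensional K (W i)] (hWi : W i ≠ ⊥)
    (hT : ∀ i, (W i).map T ≤ W (i + 1)) (hinj : Function.Injective T) :
    ∃ μ ≠ 0, ∀ a, a ^ n = μ → T.HasEigenvalue a := by
  have hmaps : ∀ w ∈ W i, (T ^ n) w ∈ W i := fun w hw ↦ by
    simpa using pow_apply_mem_of_map_le hT hw n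
  obtain ⟨μ, w, hw, hTw, hw₀⟩ := exists_hasEigenvector_mem hWi hmaps
  rw [mem_eigenspace_iff] at hTw
  have hμ : μ ≠ 0 := by
    rintro rfl
    refine hw₀ (hinj.iterate n ?_)
    rw [← Module.End.coe_pow, hTw, zero_smul, map_zero]
  have hindep := linearIndependent_pow_apply_of_iSupIndep hW hT hinj hw hw₀
  exact ⟨μ, hμ, fun a ha ↦ hasEigenvalue_of_isRoot_of_aeval_apply_eq_zero (p := X ^ n - C μ) hindep
    (X_pow_sub_C_ne_zero (Nat.pos_of_ne_zero hn) μ) natDegree_X_pow_sub_C.le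
    (by simp [hTw]) (by simp [ha])⟩

/-- The index type `ι` plays the role of `ℤ / n`; both `ZMod n` and `Fin n` qualify. -/
theorem stmt_2_general [IsAlgClosed K] (hn : (n : K) ≠ 0) (hW : iSupIndep W)
    [FiniteDimensional K (W i)] (hWi : W i ≠ ⊥) (hT : ∀ i, (W i).map T ≤ W (i + 1))
    (hinj : Function.Injective T) :
    ∃ s : Finset K, s.card = n ∧ ∀ a ∈ s, T.HasEigenvalue a := by
  obtain ⟨μ, hμ, hroots⟩ :=
    exists_ne_zero_forall_pow_eq_hasEigenvalue (by rintro rfl; simp at hn) hW hWi hT hinj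
  obtain ⟨s, hcard, hs⟩ := exists_finset_card_eq_forall_pow_eq hn hμ
  exact ⟨s, hcard, fun a ha ↦ hroots a (hs a ha)⟩

end CyclicShift

/-- If `V = W₀ ⊕ ⋯ ⊕ W_{n-1}` (`n ≥ 3`) is a direct sum decomposition of a
finite-dimensional complex vector space into nonzero subspaces and `T` is a linear
automorphism with `T(Wᵢ) = W_{i+1 mod n}`, then `T` has at least three distinct
eigenvalues. -/
theorem stmt_2 {V : Type*} [AddCommGroup V] [Module ℂ V] [FiniteDimensional ℂ V]
    {n : ℕ} [NeZero n] (hn : 3 ≤ n) (W : Fin n → Submodule ℂ V)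
    (hW : ∀ i, W i ≠ ⊥)
    (hindep : iSupIndep W) (hspan : ⨆ i, W i = ⊤)
    (T : V ≃ₗ[ℂ] V)
    (hT : ∀ i : Fin n, (W i).map (T : V →ₗ[ℂ] V) = W (i + 1)) :
    ∃ a b c : ℂ, a ≠ b ∧ a ≠ c ∧ b ≠ c ∧
      Module.End.HasEigenvalue (T : V →ₗ[ℂ] V) a ∧
      Module.End.HasEigenvalue (T : V →ₗ[ℂ] V) b ∧
      Module.End.HasEigenvalue (T : V →ₗ[ℂ] V) c := by
  open scoped Fin.CommRing in
  obtain ⟨s, hcard, hs⟩ :=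
    stmt_2_general (NeZero.ne (n : ℂ)) hindep (hW 0) (fun i ↦ (hT i).le) T.injective
  obtain ⟨a, b, c, ha, hb, hc, hab, hac, hbc⟩ := Finset.two_lt_card_iff.mp (hcard.symm ▸ hn)
  exact ⟨a, b, c, hab, hac, hbc, hs a ha, hs b hb, hs c hc⟩
end

section
/- Let $K$ be a closed subgroup of the product topological group $SU(5) \times SU(8)$ such that both coordinate projections $K \to SU(5)$ and $K \to SU(8)$ are surjective. Then $K = SU(5) \times SU(8)$. -/
/-- The special unitary group `SU(n)`, as a subgroup of the unitary group of
`n × n` complex matrices (which carries the topology induced from matrices). -/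
def SU (n : ℕ) : Subgroup (Matrix.unitaryGroup (Fin n) ℂ) where
  carrier := {A | (A : Matrix (Fin n) (Fin n) ℂ).det = 1}
  one_mem' := by simp
  mul_mem' := by
    intro A B hA hB
    show ((A * B : Matrix.unitaryGroup (Fin n) ℂ) : Matrix (Fin n) (Fin n) ℂ).det = 1
    rw [Matrix.UnitaryGroup.mul_val, Matrix.det_mul, hA, hB, mul_one]
  inv_mem' := by
    intro A hA
    show ((A⁻¹ : Matrix.unitaryGroup (Fin n) ℂ) : Matrix (Fin n) (Fin n) ℂ).det = 1
    rw [Matrix.UnitaryGroup.inv_val, Matrix.star_eq_conjTranspose, Matrix.det_conjTranspose,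
      show ((A : Matrix (Fin n) (Fin n) ℂ)).det = 1 from hA]
    exact star_one ℂ

/-!
A subgroup `K` of `SU(m) × SU(n)` with surjective projections is everything as soon as one of its
two Goursat kernels is everything. Otherwise both kernels are proper normal subgroups, hence
scalar: a normal subgroup of `U(n)` containing a non-scalar diagonal matrix contains its commutators
with the rotations of a coordinate plane, whose traces fill an interval ending at `2`; so it
contains a neighbourhood of `1` in a coroot circle, then all coroot circles, then `SU(n)`.

If both kernels are scalar, compare torsion at `p = mn + 1`, which is prime to `m` and `n`. The
`p`-torsion of the diagonal torus of `SU(n)`, of order `p ^ (n - 1)`, lifts to `K` because the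
kernel of `K → SU(n)` is central of exponent dividing `m`, and it still embeds into `SU(m)` because
the other kernel has exponent dividing `n`. Its image is simultaneously diagonalizable, so has order
at most `p ^ (m - 1)`. Hence `n ≤ m`, and `m = n` by symmetry.
-/

section CentralLift

variable {E Q T : Type*} [Group E] [Group Q] [CommGroup T] {m p : ℕ}

theorem eq_of_map_eq_of_pow_eq_one {π : E →* Q} (hcentral : π.ker ≤ Subgroup.center E)
    (hker : ∀ z ∈ π.ker, z ^ m = 1) (hmp : m.Coprime p) {a b : E} (ha : a ^ p = 1)
    (hb : b ^ p = 1) (hab : π a = π b) : a = b := by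
  have hz : a * b⁻¹ ∈ π.ker := by rw [MonoidHom.mem_ker, map_mul, map_inv, hab, mul_inv_cancel]
  have hzb : Commute (a * b⁻¹) b := ((Subgroup.mem_center_iff.mp (hcentral hz)) b).symm
  have hzp : (a * b⁻¹) ^ p = 1 := by
    simpa [ha, hb] using (hzb.mul_pow p).symm
  exact mul_inv_eq_one.mp ((pow_eq_one_iff_of_coprime hmp).mp ⟨hker _ hz, hzp⟩)

theorem exists_map_eq_and_pow_eq_one {π : E →* Q} (hπ : Function.Surjective π)
    (hker : ∀ z ∈ π.ker, z ^ m = 1) (hmp : m.Coprime p) {q : Q} (hq : q ^ p = 1) :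
    ∃ a, π a = q ∧ a ^ p = 1 := by
  obtain ⟨k, hkm, hkp⟩ := Nat.chineseRemainder hmp 0 1
  obtain ⟨a, rfl⟩ := hπ q
  refine ⟨a ^ k, ?_, ?_⟩
  · rw [map_pow, pow_eq_pow_mod k hq, hkp, ← pow_eq_pow_mod 1 hq, pow_one]
  · obtain ⟨l, rfl⟩ := (Nat.modEq_zero_iff_dvd).mp hkm
    have hap : a ^ p ∈ π.ker := by rw [MonoidHom.mem_ker, map_pow, hq]
    rw [← pow_mul, mul_comm, pow_mul, pow_mul, hker _ hap, one_pow]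

theorem exists_monoidHom_lift_of_coprime {π : E →* Q} (hπ : Function.Surjective π)
    (hcentral : π.ker ≤ Subgroup.center E) (hker : ∀ z ∈ π.ker, z ^ m = 1) (hmp : m.Coprime p)
    (hT : ∀ t : T, t ^ p = 1) (φ : T →* Q) : ∃ ψ : T →* E, π.comp ψ = φ := by
  have hφ (t : T) : φ t ^ p = 1 := by rw [← map_pow, hT, map_one]
  choose ψ hπψ hψp using fun t ↦ exists_map_eq_and_pow_eq_one hπ hker hmp (hφ t)
  have hcomm (s t : T) : Commute (ψ s) (ψ t) := by
    refine mul_inv_eq_iff_eq_mul.mp <|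
      eq_of_map_eq_of_pow_eq_one hcentral hker hmp ?_ (hψp t) ?_
    · rw [conj_pow, hψp, mul_one, mul_inv_cancel]
    · rw [map_mul, map_mul, map_inv, hπψ, hπψ, ← map_mul, mul_comm, map_mul, mul_inv_cancel_right]
  refine ⟨MonoidHom.mk' ψ fun s t ↦ ?_, MonoidHom.ext hπψ⟩
  refine eq_of_map_eq_of_pow_eq_one hcentral hker hmp (hψp _) ?_ ?_
  · rw [(hcomm s t).mul_pow, hψp, hψp, one_mul]
  · simp only [map_mul, hπψ]

end CentralLift

theorem eq_top_of_mem_nhds {G : Type*} [Group G] [TopologicalSpace G] [SeparatelyContinuousMul G]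
    [ConnectedSpace G] {H : Subgroup G} {g : G} (hg : (H : Set G) ∈ nhds g) : H = ⊤ := by
  have hopen : IsOpen (H : Set G) := H.isOpen_of_mem_nhds hg
  exact SetLike.coe_injective <|
    IsClopen.eq_univ ⟨H.isClosed_of_isOpen hopen, hopen⟩ ⟨1, H.one_mem⟩

theorem eq_top_of_forall_re_lt_mem {H : Subgroup Circle} {r : ℝ} (hr : r < 1)
    (hH : ∀ z : Circle, r < (z : ℂ).re → z ∈ H) : H = ⊤ := by
  have hopen : IsOpen {z : Circle | r < (z : ℂ).re} := isOpen_lt (by fun_prop) (by fun_prop)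
  exact eq_top_of_mem_nhds (Filter.mem_of_superset (hopen.mem_nhds (x := 1) (by simpa)) hH)

section SimultaneousDiagonalization

variable {𝕜 E ι α : Type*} [RCLike 𝕜] [NormedAddCommGroup E] [InnerProductSpace 𝕜 E]
  [FiniteDimensional 𝕜 E] [Fintype ι]

open Module Module.End

theorem exists_orthonormalBasis_subordinate {V : α → Submodule 𝕜 E}
    (hι : finrank 𝕜 E = Fintype.card ι)
    (hV : OrthogonalFamily 𝕜 (fun i ↦ V i) fun i ↦ (V i).subtypeₗᵢ) (htop : iSup V = ⊤) :
    ∃ b : OrthonormalBasis ι 𝕜 E, ∀ i, ∃ a, b i ∈ V a := by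
  classical
  have hint : DirectSum.IsInternal V := by
    rw [hV.isInternal_iff, htop, Submodule.top_orthogonal_eq_bot]
  have : Fintype {a // V a ≠ ⊥} :=
    (WellFoundedGT.finite_ne_bot_of_iSupIndep hV.independent).fintype
  have hint' := DirectSum.isInternal_ne_bot_iff.mpr hint
  have hV' := hV.comp Subtype.val_injective (γ := {a // V a ≠ ⊥})
  refine ⟨(hint'.subordinateOrthonormalBasis hι hV').reindex (Fintype.equivFin ι).symm, fun i ↦ ?_⟩
  rw [OrthonormalBasis.reindex_apply]
  exact ⟨_, hint'.subordinateOrthonormalBasis_subordinate hι _ hV'⟩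

theorem exists_orthonormalBasis_forall_smul_eq {T : α → E →ₗ[𝕜] E}
    (hι : finrank 𝕜 E = Fintype.card ι) (hT : ∀ a, (T a).IsSymmetric)
    (hcomm : Pairwise (Function.onFun Commute T)) :
    ∃ b : OrthonormalBasis ι 𝕜 E, ∀ i a, ∃ μ : 𝕜, T a (b i) = μ • b i := by
  obtain ⟨b, hb⟩ := exists_orthonormalBasis_subordinate hι
    (LinearMap.IsSymmetric.orthogonalFamily_iInf_eigenspaces hT)
    (LinearMap.IsSymmetric.iSup_iInf_eq_top_of_commute hT hcomm)
  refine ⟨b, fun i a ↦ ?_⟩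
  obtain ⟨μ, hμ⟩ := hb i
  exact ⟨μ a, mem_eigenspace_iff.mp (Submodule.mem_iInf _ |>.mp hμ a)⟩

end SimultaneousDiagonalization

section MatrixDiagonalization

open Matrix ComplexStarModule

section RealPart

variable {R : Type*} [Ring R] [Algebra ℂ R] [StarRing R] [StarModule ℂ R] {x a : R}

theorem commute_realPart (h : Commute x a) (h' : Commute x (star a)) : Commute x (ℜ a : R) := by
  rw [realPart_apply_coe]
  exact (h.add_right h').smul_right _

theorem commute_imaginaryPart (h : Commute x a) (h' : Commute x (star a)) :
    Commute x (ℑ a : R) := by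
  rw [imaginaryPart_apply_coe]
  exact ((h.sub_right h').smul_right _).smul_right _

end RealPart

variable {ι α : Type*} [Fintype ι] [DecidableEq ι]

theorem exists_unitary_forall_isDiag_of_isHermitian {𝕜 : Type*} [RCLike 𝕜]
    {A : α → Matrix ι ι 𝕜} (hA : ∀ a, (A a).IsHermitian) (hcomm : ∀ a b, Commute (A a) (A b)) :
    ∃ V : unitaryGroup ι 𝕜, ∀ a, (star (V : Matrix ι ι 𝕜) * A a * V).IsDiag := by
  obtain ⟨b, hb⟩ := exists_orthonormalBasis_forall_smul_eq (ι := ι)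
    (T := fun a ↦ (A a).toEuclideanLin) finrank_euclideanSpace
    (fun a ↦ isSymmetric_toEuclideanLin_iff.mpr (hA a))
    (fun a c _ ↦ by
      simp only [Function.onFun, commute_iff_eq, Module.End.mul_eq_comp, ← toLpLin_mul_same,
        (hcomm a c).eq])
  let V : unitaryGroup ι 𝕜 := ⟨(EuclideanSpace.basisFun ι 𝕜).toBasis.toMatrix b.toBasis,
    (EuclideanSpace.basisFun ι 𝕜).toMatrix_orthonormalBasis_mem_unitary b⟩
  refine ⟨V, fun a ↦ ?_⟩
  choose μ hμ using fun i ↦ hb i a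
  have hAV : A a * V = V * diagonal μ := by
    ext i j
    simpa only [mul_diagonal, mul_comm] using! congr(($(hμ j)).ofLp i)
  rw [mul_assoc, hAV, ← mul_assoc, Unitary.coe_star_mul_self, one_mul]
  exact isDiag_diagonal μ

theorem exists_unitary_forall_isDiag {A : α → Matrix ι ι ℂ} (hcomm : ∀ a b, Commute (A a) (A b))
    (hstar : ∀ a b, Commute (A a) (star (A b))) :
    ∃ V : unitaryGroup ι ℂ, ∀ a, (star (V : Matrix ι ι ℂ) * A a * V).IsDiag := by
  let H : α ⊕ α → selfAdjoint (Matrix ι ι ℂ) := Sum.elim (fun a ↦ ℜ (A a)) (fun a ↦ ℑ (A a))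
  have commute_H {X : Matrix ι ι ℂ} (hX : ∀ a, Commute X (A a)) (hX' : ∀ a, Commute X (star (A a)))
      (s : α ⊕ α) : Commute X (H s) := by
    cases s with
    | inl a => exact commute_realPart (hX a) (hX' a)
    | inr a => exact commute_imaginaryPart (hX a) (hX' a)
  obtain ⟨V, hV⟩ := exists_unitary_forall_isDiag_of_isHermitian (A := fun s ↦ (H s : Matrix ι ι ℂ))
    (fun s ↦ (H s).2) fun s t ↦ commute_H (fun a ↦ (commute_H (hcomm a) (hstar a) s).symm)
      (fun a ↦ (commute_H (fun b ↦ (hstar b a).symm) (fun b ↦ (hcomm a b).star_star) s).symm) t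
  refine ⟨V, fun a ↦ ?_⟩
  rw [← realPart_add_I_smul_imaginaryPart (A a), mul_add, add_mul, mul_smul_comm, smul_mul_assoc]
  exact (hV (.inl a)).add ((hV (.inr a)).smul Complex.I)

end MatrixDiagonalization

section DiagonalUnitary

open Matrix

variable (ι : Type*) [Fintype ι] [DecidableEq ι]

/-- The embedding of the standard torus into the unitary group as the diagonal unitary matrices. -/
noncomputable def diagonalUnitary : (ι → Circle) →* unitaryGroup ι ℂ where
  toFun d := ⟨diagonal fun i ↦ (d i : ℂ), by
    rw [mem_unitaryGroup_iff, star_eq_conjTranspose, diagonal_conjTranspose, diagonal_mul_diagonal,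
      ← diagonal_one]
    congr! with i
    simp [Complex.mul_conj]⟩
  map_one' := Subtype.ext diagonal_one
  map_mul' d e := Subtype.ext (diagonal_mul_diagonal _ _).symm

/-- The scalar unitary matrices, parametrized by the circle. -/
noncomputable def scalarUnitary : Circle →* unitaryGroup ι ℂ :=
  (diagonalUnitary ι).comp (Pi.constMonoidHom ι Circle)

/-- The determinant of a unitary matrix, as an element of the circle. -/
noncomputable def circleDet : unitaryGroup ι ℂ →* Circle where
  toFun U := ⟨(U : Matrix ι ι ℂ).det,
    mem_sphere_zero_iff_norm.mpr (CStarRing.norm_of_mem_unitary (det_of_mem_unitary U.2))⟩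
  map_one' := Subtype.ext det_one
  map_mul' _ _ := Subtype.ext (det_mul _ _)

variable {ι}

@[simp]
theorem coe_diagonalUnitary (d : ι → Circle) :
    (diagonalUnitary ι d : Matrix ι ι ℂ) = diagonal fun i ↦ (d i : ℂ) := rfl

theorem diagonalUnitary_injective : Function.Injective (diagonalUnitary ι) := fun _ _ h ↦
  funext fun i ↦ Circle.coe_injective (congrFun (diagonal_injective (congrArg Subtype.val h)) i)

theorem circleDet_diagonalUnitary (d : ι → Circle) :
    circleDet ι (diagonalUnitary ι d) = ∏ i, d i :=
  Circle.ext ((det_diagonal).trans (map_prod Circle.coeHom d Finset.univ).symm)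

theorem circleDet_scalarUnitary (z : Circle) :
    circleDet ι (scalarUnitary ι z) = z ^ Fintype.card ι :=
  (circleDet_diagonalUnitary fun _ : ι ↦ z).trans (Finset.prod_const z)

theorem mem_range_diagonalUnitary_of_isDiag {U : unitaryGroup ι ℂ}
    (hU : (U : Matrix ι ι ℂ).IsDiag) : U ∈ (diagonalUnitary ι).range := by
  have hnorm (i : ι) : U i i * star (U i i) = 1 := by
    have := congrFun₂ (mem_unitaryGroup_iff.mp U.2) i i
    rwa [← hU.diagonal_diag, star_eq_conjTranspose, diagonal_conjTranspose, diagonal_mul_diagonal,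
      diagonal_apply_eq, one_apply_eq] at this
  exact ⟨fun i ↦ ⟨U i i, mem_sphere_zero_iff_norm.mpr <|
    CStarRing.norm_of_mem_unitary (Unitary.mem_iff_self_mul_star.mpr (hnorm i))⟩,
    Subtype.ext hU.diagonal_diag⟩

theorem commute_scalarUnitary (z : Circle) (U : unitaryGroup ι ℂ) :
    Commute (scalarUnitary ι z) U :=
  Subtype.ext (scalar_commute (z : ℂ) (Commute.all _) (U : Matrix ι ι ℂ)).eq

theorem exists_conj_mem_range_diagonalUnitary (A : Subgroup (unitaryGroup ι ℂ))
    [IsMulCommutative A] :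
    ∃ V, ∀ U ∈ A, V⁻¹ * U * V ∈ (diagonalUnitary ι).range := by
  have hcomm {U W : unitaryGroup ι ℂ} (hU : U ∈ A) (hW : W ∈ A) :
      Commute (U : Matrix ι ι ℂ) (W : Matrix ι ι ℂ) :=
    congr((($(mul_comm' (⟨U, hU⟩ : A) ⟨W, hW⟩) : A) : Matrix ι ι ℂ))
  obtain ⟨V, hV⟩ := exists_unitary_forall_isDiag
    (A := fun U : A ↦ ((U : unitaryGroup ι ℂ) : Matrix ι ι ℂ))
    (fun U W ↦ hcomm U.2 W.2) fun U W ↦ hcomm U.2 (A.inv_mem W.2)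
  exact ⟨V, fun U hU ↦ mem_range_diagonalUnitary_of_isDiag (hV ⟨U, hU⟩)⟩

theorem exists_eq_conj_diagonalUnitary (U : unitaryGroup ι ℂ) :
    ∃ V d, U = V * diagonalUnitary ι d * V⁻¹ := by
  obtain ⟨V, hV⟩ := exists_conj_mem_range_diagonalUnitary (Subgroup.zpowers U)
  obtain ⟨d, hd⟩ := hV U (Subgroup.mem_zpowers U)
  exact ⟨V, d, by rw [hd]; group⟩

theorem exists_eq_conj_diagonalUnitary_of_mem {N : Subgroup (unitaryGroup ι ℂ)} [hN : N.Normal]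
    {U : unitaryGroup ι ℂ} (hU : U ∈ N) :
    ∃ V d, diagonalUnitary ι d ∈ N ∧ U = V * diagonalUnitary ι d * V⁻¹ := by
  obtain ⟨V, d, rfl⟩ := exists_eq_conj_diagonalUnitary U
  exact ⟨V, d, by simpa only [mul_assoc, inv_mul_cancel_left, inv_mul_cancel, mul_one, inv_inv]
    using hN.conj_mem _ hU V⁻¹, rfl⟩

theorem circleDet_conj (V U : unitaryGroup ι ℂ) :
    circleDet ι (V * U * V⁻¹) = circleDet ι U := by
  rw [map_mul, map_mul, map_inv, mul_right_comm, mul_inv_cancel, one_mul]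

end DiagonalUnitary

section Coroot

variable {ι : Type*} [DecidableEq ι]

/-- The coroot `z ↦ (…, z, …, z⁻¹, …)` of the standard torus, with `z` in position `i` and `z⁻¹` in
position `j`; it is trivial when `i = j`. -/
noncomputable def coroot (i j : ι) : Circle →* (ι → Circle) :=
  MonoidHom.mulSingle (fun _ ↦ Circle) i / MonoidHom.mulSingle (fun _ ↦ Circle) j

theorem coroot_apply (i j : ι) (z : Circle) :
    coroot i j z = Pi.mulSingle i z / Pi.mulSingle j z := rfl

theorem coroot_zero_one (z : Circle) : coroot (0 : Fin 2) 1 z = ![z, z⁻¹] := by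
  funext i
  fin_cases i <;> simp [coroot_apply]

end Coroot

section RankTwo

open Matrix
open scoped commutatorElement

variable {N : Subgroup (unitaryGroup (Fin 2) ℂ)} [N.Normal]

theorem eq_cons_or_eq_cons_of_add_eq {d : Fin 2 → Circle} {z : Circle} (hprod : d 0 * d 1 = 1)
    (hsum : (d 0 : ℂ) + d 1 = z + (z⁻¹ : Circle)) : d = ![z, z⁻¹] ∨ d = ![z, z⁻¹]⁻¹ := by
  have hd : d 1 = (d 0)⁻¹ := eq_inv_of_mul_eq_one_right hprod
  have hroot : ((d 0 : ℂ) - z) * (d 0 - (z⁻¹ : Circle)) = 0 := by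
    have hd' : (d 0 : ℂ) * d 1 = 1 := congrArg Circle.coeHom hprod
    have hz : (z : ℂ) * (z⁻¹ : Circle) = 1 := congrArg Circle.coeHom (mul_inv_cancel z)
    linear_combination (d 0 : ℂ) * hsum - hd' + hz
  rcases mul_eq_zero.mp hroot with h | h
  · left
    funext i
    fin_cases i <;> simp [hd, Circle.ext (sub_eq_zero.mp h)]
  · right
    funext i
    fin_cases i <;> simp [hd, Circle.ext (sub_eq_zero.mp h)]

theorem diagonalUnitary_coroot_mem_of_trace_eq {X : unitaryGroup (Fin 2) ℂ} (hX : X ∈ N)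
    (hdet : circleDet (Fin 2) X = 1) {z : Circle}
    (htrace : (X : Matrix (Fin 2) (Fin 2) ℂ).trace = z + (z⁻¹ : Circle)) :
    diagonalUnitary (Fin 2) (coroot 0 1 z) ∈ N := by
  obtain ⟨V, d, hd, rfl⟩ := exists_eq_conj_diagonalUnitary_of_mem hX
  have hprod : d 0 * d 1 = 1 := by
    rwa [circleDet_conj, circleDet_diagonalUnitary, Fin.prod_univ_two] at hdet
  have hsum : (d 0 : ℂ) + d 1 = z + (z⁻¹ : Circle) := by
    rwa [UnitaryGroup.mul_val, trace_mul_comm, ← UnitaryGroup.mul_val, ← mul_assoc,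
      inv_mul_cancel, one_mul, coe_diagonalUnitary, trace_diagonal, Fin.sum_univ_two] at htrace
  rw [coroot_zero_one]
  rcases eq_cons_or_eq_cons_of_add_eq hprod hsum with rfl | rfl
  · exact hd
  · rwa [map_inv, inv_mem_iff] at hd

theorem star_rotation (c s : ℝ) :
    star (!![(c : ℂ), -s; s, c] : Matrix (Fin 2) (Fin 2) ℂ) = !![(c : ℂ), s; -s, c] := by
  ext i j
  fin_cases i <;> fin_cases j <;> simp [star_apply]

theorem rotation_mem_unitaryGroup {c s : ℝ} (h : c ^ 2 + s ^ 2 = 1) :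
    (!![(c : ℂ), -s; s, c] : Matrix (Fin 2) (Fin 2) ℂ) ∈ unitaryGroup (Fin 2) ℂ := by
  have hC : (c : ℂ) * c + s * s = 1 := by exact_mod_cast (by linear_combination h)
  rw [mem_unitaryGroup_iff, star_rotation, mul_fin_two, one_fin_two]
  simp [hC, mul_comm, add_comm]

theorem coe_diagonalUnitary_fin_two (a b : Circle) :
    (diagonalUnitary (Fin 2) ![a, b] : Matrix (Fin 2) (Fin 2) ℂ) = !![(a : ℂ), 0; 0, (b : ℂ)] := by
  ext i j
  fin_cases i <;> fin_cases j <;> simp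

theorem exists_trace_commutator_eq_of_sq_add_sq_eq_one (a b : Circle) {c s : ℝ}
    (h : c ^ 2 + s ^ 2 = 1) :
    ∃ A : unitaryGroup (Fin 2) ℂ,
      ((⁅diagonalUnitary (Fin 2) ![a, b], A⁆ : unitaryGroup (Fin 2) ℂ) :
        Matrix (Fin 2) (Fin 2) ℂ).trace = 2 * (c ^ 2 + s ^ 2 * ((a / b : Circle) : ℂ).re : ℝ) := by
  have haa : (a : ℂ) * (a⁻¹ : Circle) = 1 := congrArg Circle.coeHom (mul_inv_cancel a)
  have hbb : (b : ℂ) * (b⁻¹ : Circle) = 1 := congrArg Circle.coeHom (mul_inv_cancel b)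
  have hab : (a : ℂ) * (b⁻¹ : Circle) + b * (a⁻¹ : Circle) = 2 * ((a / b : Circle) : ℂ).re := by
    have hre := Complex.add_conj (a / b : Circle)
    rw [← Circle.coe_inv_eq_conj, inv_div, div_eq_mul_inv, div_eq_mul_inv] at hre
    exact_mod_cast hre
  have hinv : (diagonalUnitary (Fin 2) ![a, b])⁻¹ = diagonalUnitary (Fin 2) ![a⁻¹, b⁻¹] := by
    rw [← map_inv]
    congr 1
    funext i
    fin_cases i <;> rfl
  refine ⟨⟨_, rotation_mem_unitaryGroup h⟩, ?_⟩
  rw [commutatorElement_def, hinv, UnitaryGroup.mul_val, UnitaryGroup.mul_val,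
    UnitaryGroup.mul_val, UnitaryGroup.inv_val, star_rotation, coe_diagonalUnitary_fin_two,
    coe_diagonalUnitary_fin_two, mul_fin_two, mul_fin_two, mul_fin_two, trace_fin_two_of]
  simp only [Complex.ofReal_add, Complex.ofReal_mul, Complex.ofReal_pow]
  linear_combination (s : ℂ) ^ 2 * hab + (c : ℂ) ^ 2 * haa + (c : ℂ) ^ 2 * hbb

theorem exists_trace_commutator_eq_of_re_lt {a b : Circle} {x : ℝ}
    (hx : ((a / b : Circle) : ℂ).re < x) (hx' : x ≤ 1) :
    ∃ A : unitaryGroup (Fin 2) ℂ,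
      ((⁅diagonalUnitary (Fin 2) ![a, b], A⁆ : unitaryGroup (Fin 2) ℂ) :
        Matrix (Fin 2) (Fin 2) ℂ).trace = 2 * x := by
  set r := ((a / b : Circle) : ℂ).re with hr
  have hr1 : 0 < 1 - r := by linarith
  have hc : √((x - r) / (1 - r)) ^ 2 = (x - r) / (1 - r) :=
    Real.sq_sqrt (div_nonneg (by linarith) hr1.le)
  have hs : √((1 - x) / (1 - r)) ^ 2 = (1 - x) / (1 - r) :=
    Real.sq_sqrt (div_nonneg (by linarith) hr1.le)
  obtain ⟨A, hA⟩ := exists_trace_commutator_eq_of_sq_add_sq_eq_one a b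
    (c := √((x - r) / (1 - r))) (s := √((1 - x) / (1 - r))) (by rw [hc, hs]; field_simp; ring)
  refine ⟨A, hA.trans ?_⟩
  rw [hc, hs, ← hr]
  congr 2
  field_simp
  ring

theorem re_lt_one_of_ne_one {z : Circle} (hz : z ≠ 1) : (z : ℂ).re < 1 := by
  refine lt_of_le_of_ne (z.norm_coe ▸ (z : ℂ).re_le_norm) fun hre ↦ hz (Circle.ext ?_)
  have hnorm := z.normSq_coe
  rw [Complex.normSq_apply, hre] at hnorm
  exact Complex.ext hre (by simpa using hnorm)

theorem diagonalUnitary_coroot_mem_of_commutator_mem {a b : Circle} (hab : a ≠ b)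
    (hcomm : ∀ A, ⁅diagonalUnitary (Fin 2) ![a, b], A⁆ ∈ N) (z : Circle) :
    diagonalUnitary (Fin 2) (coroot 0 1 z) ∈ N := by
  suffices h : N.comap ((diagonalUnitary (Fin 2)).comp (coroot 0 1)) = ⊤ from
    (Subgroup.mem_comap (f := (diagonalUnitary (Fin 2)).comp (coroot 0 1))).mp
      (h ▸ Subgroup.mem_top z)
  refine eq_top_of_forall_re_lt_mem (re_lt_one_of_ne_one (div_ne_one.mpr hab)) fun z hz ↦ ?_
  obtain ⟨A, hA⟩ := exists_trace_commutator_eq_of_re_lt hz (z.norm_coe ▸ (z : ℂ).re_le_norm)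
  refine diagonalUnitary_coroot_mem_of_trace_eq (hcomm A) ?_ ?_
  · rw [map_commutatorElement, commutatorElement_eq_one_iff_commute]
    exact Commute.all _ _
  · rw [hA, Circle.coe_inv_eq_conj, Complex.add_conj]
    norm_cast

end RankTwo

section IsometryEmbedding

open Matrix
open scoped commutatorElement

variable {ι κ : Type*} [DecidableEq ι] [DecidableEq κ]

theorem submatrix_one_mul_single_mul [Fintype κ] (e : κ → ι) (k l : κ) (c : ℂ) :
    (1 : Matrix ι ι ℂ).submatrix id e * single k l c * ((1 : Matrix ι ι ℂ).submatrix id e)ᴴ =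
      single (e k) (e l) c := by
  have hone : single k l c = c • vecMulVec (Pi.single k 1) (Pi.single l 1) := by
    rw [← single_eq_single_vecMulVec_single, smul_single, smul_eq_mul, mul_one]
  rw [hone, Matrix.mul_smul, Matrix.smul_mul, mul_vecMulVec, vecMulVec_mul]
  ext i j
  rw [Matrix.smul_apply, vecMulVec_apply, single_apply]
  rcases eq_or_ne i (e k) with rfl | hi <;> rcases eq_or_ne j (e l) with rfl | hj <;>
    simp_all [one_apply, eq_comm]

variable [Fintype ι]

theorem conjTranspose_submatrix_one_mul_self {e : κ → ι} (he : Function.Injective e) :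
    ((1 : Matrix ι ι ℂ).submatrix id e)ᴴ * (1 : Matrix ι ι ℂ).submatrix id e = 1 := by
  rw [conjTranspose_submatrix, conjTranspose_one, ← submatrix_mul _ _ e id e Function.bijective_id,
    mul_one, submatrix_one _ he]

variable [Fintype κ]

theorem one_add_isometry_conj_mul {P : Matrix ι κ ℂ} (hP : Pᴴ * P = 1) (A B : Matrix κ κ ℂ) :
    (1 + P * (A - 1) * Pᴴ) * (1 + P * (B - 1) * Pᴴ) = 1 + P * (A * B - 1) * Pᴴ := by
  have hmul : P * (A - 1) * Pᴴ * (P * (B - 1) * Pᴴ) = P * ((A - 1) * (B - 1)) * Pᴴ := by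
    simp only [Matrix.mul_assoc]
    rw [← Matrix.mul_assoc Pᴴ, hP, Matrix.one_mul]
  have hsum : A * B - 1 = A - 1 + (B - 1) + (A - 1) * (B - 1) := by noncomm_ring
  rw [add_mul, one_mul, mul_add, mul_one, hmul, hsum, Matrix.mul_add, Matrix.mul_add,
    Matrix.add_mul, Matrix.add_mul]
  abel

/-- The embedding of unitary groups induced by an isometry `P : ℂ^κ → ℂ^ι`, letting a unitary of
`ℂ^κ` act on the range of `P` and trivially on its orthogonal complement. -/
def isometryEmbedding {P : Matrix ι κ ℂ} (hP : Pᴴ * P = 1) :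
    unitaryGroup κ ℂ →* unitaryGroup ι ℂ where
  toFun A := ⟨1 + P * ((A : Matrix κ κ ℂ) - 1) * Pᴴ, by
    have hstar : star (1 + P * ((A : Matrix κ κ ℂ) - 1) * Pᴴ) =
        1 + P * (star (A : Matrix κ κ ℂ) - 1) * Pᴴ := by
      simp [star_eq_conjTranspose, conjTranspose_mul, Matrix.mul_assoc]
    rw [mem_unitaryGroup_iff, hstar, one_add_isometry_conj_mul hP, mem_unitaryGroup_iff.mp A.2,
      sub_self, Matrix.mul_zero, Matrix.zero_mul, add_zero]⟩
  map_one' := Subtype.ext (by simp)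
  map_mul' A B := Subtype.ext (one_add_isometry_conj_mul hP A B).symm

theorem coe_isometryEmbedding {P : Matrix ι κ ℂ} (hP : Pᴴ * P = 1) (A : unitaryGroup κ ℂ) :
    (isometryEmbedding hP A : Matrix ι ι ℂ) = 1 + P * ((A : Matrix κ κ ℂ) - 1) * Pᴴ := rfl

theorem conj_isometryEmbedding {P : Matrix ι κ ℂ} (hP : Pᴴ * P = 1) {U : unitaryGroup ι ℂ}
    {W : unitaryGroup κ ℂ} (hUP : (U : Matrix ι ι ℂ) * P = P * (W : Matrix κ κ ℂ))
    (A : unitaryGroup κ ℂ) :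
    U * isometryEmbedding hP A * U⁻¹ = isometryEmbedding hP (W * A * W⁻¹) := by
  have hPU : Pᴴ * star (U : Matrix ι ι ℂ) = star (W : Matrix κ κ ℂ) * Pᴴ := by
    simpa only [conjTranspose_mul] using! congrArg conjTranspose hUP
  have hU := mem_unitaryGroup_iff.mp U.2
  have hW := mem_unitaryGroup_iff.mp W.2
  apply Subtype.ext
  simp only [UnitaryGroup.mul_val, UnitaryGroup.inv_val, coe_isometryEmbedding]
  calc U.1 * (1 + P * (A.1 - 1) * Pᴴ) * star U.1
    _ = U.1 * star U.1 + U.1 * P * (A.1 - 1) * (Pᴴ * star U.1) := by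
      simp only [mul_add, add_mul, mul_one, Matrix.mul_assoc]
    _ = 1 + P * (W.1 * (A.1 - 1) * star W.1) * Pᴴ := by
      simp only [hU, hUP, hPU, Matrix.mul_assoc]
    _ = 1 + P * (W.1 * A.1 * star W.1 - 1) * Pᴴ := by
      rw [mul_sub, sub_mul, mul_one, hW]

theorem commutator_isometryEmbedding {P : Matrix ι κ ℂ} (hP : Pᴴ * P = 1) {U : unitaryGroup ι ℂ}
    {W : unitaryGroup κ ℂ} (hUP : (U : Matrix ι ι ℂ) * P = P * (W : Matrix κ κ ℂ))
    (A : unitaryGroup κ ℂ) :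
    ⁅U, isometryEmbedding hP A⁆ = isometryEmbedding hP ⁅W, A⁆ := by
  rw [commutatorElement_def, conj_isometryEmbedding hP hUP, ← map_inv, ← map_mul,
    commutatorElement_def]

theorem diagonalUnitary_mul_submatrix_one (d : ι → Circle) (e : κ → ι) :
    (diagonalUnitary ι d : Matrix ι ι ℂ) * (1 : Matrix ι ι ℂ).submatrix id e =
      (1 : Matrix ι ι ℂ).submatrix id e * (diagonalUnitary κ (d ∘ e) : Matrix κ κ ℂ) := by
  ext i k
  by_cases hik : i = e k <;> simp [diagonal_mul, mul_diagonal, one_apply, hik]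

theorem coe_diagonalUnitary_mulSingle (i : ι) (z : Circle) :
    (diagonalUnitary ι (Pi.mulSingle i z) : Matrix ι ι ℂ) = 1 + single i i ((z : ℂ) - 1) := by
  rw [coe_diagonalUnitary, ← diagonal_one, ← diagonal_single, diagonal_add]
  congr! with j
  rcases eq_or_ne j i with rfl | hji
  · simp
  · simp [hji]

theorem isometryEmbedding_mulSingle {e : κ → ι} (he : Function.Injective e) (k : κ) (z : Circle) :
    isometryEmbedding (conjTranspose_submatrix_one_mul_self he)
      (diagonalUnitary κ (Pi.mulSingle k z)) = diagonalUnitary ι (Pi.mulSingle (e k) z) := by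
  refine Subtype.ext ?_
  rw [coe_isometryEmbedding, coe_diagonalUnitary_mulSingle, coe_diagonalUnitary_mulSingle,
    add_sub_cancel_left, submatrix_one_mul_single_mul]

theorem isometryEmbedding_coroot {e : κ → ι} (he : Function.Injective e) (k l : κ) (z : Circle) :
    isometryEmbedding (conjTranspose_submatrix_one_mul_self he)
      (diagonalUnitary κ (coroot k l z)) = diagonalUnitary ι (coroot (e k) (e l) z) := by
  rw [coroot_apply, map_div, map_div, isometryEmbedding_mulSingle he,
    isometryEmbedding_mulSingle he, ← map_div, coroot_apply]

end IsometryEmbedding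

section NormalSubgroups

open Matrix
open scoped commutatorElement

variable {ι : Type*} [Fintype ι] [DecidableEq ι] {N : Subgroup (unitaryGroup ι ℂ)} [N.Normal]
  {d : ι → Circle}

theorem diagonalUnitary_coroot_mem_of_apply_ne (hd : diagonalUnitary ι d ∈ N) {i j : ι}
    (hij : d i ≠ d j) (z : Circle) : diagonalUnitary ι (coroot i j z) ∈ N := by
  have he : Function.Injective ![i, j] := by
    intro k l hkl
    fin_cases k <;> fin_cases l <;> simp_all
  let φ := isometryEmbedding (conjTranspose_submatrix_one_mul_self he)
  suffices h : diagonalUnitary (Fin 2) (coroot 0 1 z) ∈ N.comap φ by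
    rwa [Subgroup.mem_comap, isometryEmbedding_coroot he] at h
  refine diagonalUnitary_coroot_mem_of_commutator_mem hij (fun A ↦ ?_) z
  have hcomp : d ∘ ![i, j] = ![d i, d j] := by
    funext k
    fin_cases k <;> rfl
  rw [← hcomp, Subgroup.mem_comap, ← commutator_isometryEmbedding _
    (diagonalUnitary_mul_submatrix_one d ![i, j])]
  exact Subgroup.commutator_le_left N ⊤
    (Subgroup.commutator_mem_commutator hd (Subgroup.mem_top _))

theorem diagonalUnitary_coroot_mem_of_exists_ne (hd : diagonalUnitary ι d ∈ N) {i j : ι}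
    (hij : d i ≠ d j) (k : ι) (z : Circle) : diagonalUnitary ι (coroot k j z) ∈ N := by
  by_cases hkj : d k = d j
  · have hki : d k ≠ d i := hkj ▸ hij.symm
    have hsum : coroot k j z = coroot k i z * coroot i j z := by
      simp only [coroot_apply, div_mul_div_cancel]
    rw [hsum, map_mul]
    exact N.mul_mem (diagonalUnitary_coroot_mem_of_apply_ne hd hki z)
      (diagonalUnitary_coroot_mem_of_apply_ne hd hij z)
  · exact diagonalUnitary_coroot_mem_of_apply_ne hd hkj z

theorem eq_prod_coroot_of_prod_eq_one {e : ι → Circle} (he : ∏ k, e k = 1) (j : ι) :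
    e = ∏ k, coroot k j (e k) := by
  simp only [coroot_apply, Finset.prod_div_distrib, Finset.univ_prod_mulSingle]
  have hprod : ∏ k, (Pi.mulSingle j (e k) : ι → Circle) = 1 := by
    rw [← map_one (MonoidHom.mulSingle (fun _ : ι ↦ Circle) j), ← he, map_prod]
    rfl
  rw [hprod, div_one]

theorem ker_circleDet_le_of_apply_ne (hd : diagonalUnitary ι d ∈ N) {i j : ι}
    (hij : d i ≠ d j) : (circleDet ι).ker ≤ N := by
  intro W hW
  obtain ⟨V, e, rfl⟩ := exists_eq_conj_diagonalUnitary W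
  have he : ∏ k, e k = 1 := by
    rwa [MonoidHom.mem_ker, circleDet_conj, circleDet_diagonalUnitary] at hW
  refine ‹N.Normal›.conj_mem _ ?_ V
  rw [eq_prod_coroot_of_prod_eq_one he j]
  exact (N.comap (diagonalUnitary ι)).prod_mem fun k _ ↦
    diagonalUnitary_coroot_mem_of_exists_ne hd hij k (e k)

theorem le_range_scalarUnitary_or_ker_circleDet_le (N : Subgroup (unitaryGroup ι ℂ)) [N.Normal] :
    N ≤ (scalarUnitary ι).range ∨ (circleDet ι).ker ≤ N := by
  by_contra! ⟨hscalar, hker⟩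
  refine hscalar fun U hU ↦ ?_
  obtain ⟨V, d, hd, rfl⟩ := exists_eq_conj_diagonalUnitary_of_mem hU
  have hconst (i j : ι) : d i = d j := by
    by_contra hij
    exact hker (ker_circleDet_le_of_apply_ne hd hij)
  obtain ⟨z, rfl⟩ : ∃ z, d = fun _ ↦ z := by
    rcases isEmpty_or_nonempty ι with _ | ⟨⟨i⟩⟩
    · exact ⟨1, Subsingleton.elim _ _⟩
    · exact ⟨d i, funext fun j ↦ hconst j i⟩
  exact ⟨z, (mul_inv_eq_iff_eq_mul.mpr (commute_scalarUnitary z V).symm.eq).symm⟩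

end NormalSubgroups

section SpecialUnitary

theorem SU_eq_ker_circleDet (n : ℕ) : SU n = (circleDet (Fin n)).ker := by
  ext U
  exact (Circle.ext_iff (x := circleDet (Fin n) U) (y := 1)).symm

/-- The scalar matrices in the special unitary group. -/
noncomputable def scalarSU (n : ℕ) : Subgroup (SU n) :=
  (scalarUnitary (Fin n)).range.subgroupOf (SU n)

variable {n : ℕ}

theorem scalarSU_le_center : scalarSU n ≤ Subgroup.center (SU n) := by
  rintro A ⟨z, hz⟩
  refine Subgroup.mem_center_iff.mpr fun B ↦ Subtype.ext ?_
  have hzB := (commute_scalarUnitary z (B : Matrix.unitaryGroup (Fin n) ℂ)).symm.eq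
  rwa [hz] at hzB

theorem pow_eq_one_of_mem_scalarSU {A : SU n} (hA : A ∈ scalarSU n) : A ^ n = 1 := by
  obtain ⟨z, hz⟩ := hA
  have hzn : z ^ n = 1 := by
    have hdet : circleDet (Fin n) (scalarUnitary (Fin n) z) = 1 :=
      MonoidHom.mem_ker.mp (SU_eq_ker_circleDet n ▸ hz ▸ A.2)
    rwa [circleDet_scalarUnitary, Fintype.card_fin] at hdet
  refine Subtype.ext ?_
  rw [SubmonoidClass.coe_pow, ← Subgroup.subtype_apply, ← hz, ← map_pow, hzn, map_one,
    OneMemClass.coe_one]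

theorem exists_eq_mul_scalarUnitary [NeZero n] (U : Matrix.unitaryGroup (Fin n) ℂ) :
    ∃ A : SU n, ∃ z, U = A * scalarUnitary (Fin n) z := by
  obtain ⟨z, hz : z ^ n = circleDet (Fin n) U⟩ :=
    (Circle.isQuotientCoveringMap_npow n).surjective (circleDet (Fin n) U)
  refine ⟨⟨U * (scalarUnitary (Fin n) z)⁻¹, ?_⟩, z, (inv_mul_cancel_right _ _).symm⟩
  rw [SU_eq_ker_circleDet, MonoidHom.mem_ker, map_mul, map_inv, circleDet_scalarUnitary,
    Fintype.card_fin, hz, mul_inv_cancel]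

theorem normal_map_subtype_SU [NeZero n] (N : Subgroup (SU n)) [hN : N.Normal] :
    (N.map (SU n).subtype).Normal where
  conj_mem := by
    rintro _ ⟨X, hX, rfl⟩ U
    obtain ⟨A, z, rfl⟩ := exists_eq_mul_scalarUnitary U
    refine ⟨A * X * A⁻¹, hN.conj_mem X hX A, ?_⟩
    rw [mul_inv_rev, mul_assoc (A : Matrix.unitaryGroup (Fin n) ℂ),
      (commute_scalarUnitary z _).eq, map_mul, map_mul, map_inv]
    simp only [Subgroup.subtype_apply, mul_assoc, mul_inv_cancel_left]

theorem neZero_of_ne_top {N : Subgroup (SU n)} (hN : N ≠ ⊤) : NeZero n :=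
  ⟨fun h ↦ by subst h; exact hN (Subsingleton.elim _ _)⟩

theorem le_scalarSU_of_ne_top {N : Subgroup (SU n)} [N.Normal] (hN : N ≠ ⊤) :
    N ≤ scalarSU n := by
  have := neZero_of_ne_top hN
  have := normal_map_subtype_SU N
  rcases le_range_scalarUnitary_or_ker_circleDet_le (N.map (SU n).subtype) with h | h
  · exact Subgroup.map_le_iff_le_comap.mp h
  · rw [← SU_eq_ker_circleDet] at h
    exact absurd (top_le_iff.mp fun A _ ↦
      (Subgroup.mem_map_iff_mem Subtype.val_injective).mp (h A.2)) hN

end SpecialUnitary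

section TorusTorsion

theorem card_ker_powMonoidHom_circle (p : ℕ) [NeZero p] :
    Nat.card (powMonoidHom p : Circle →* Circle).ker = p := by
  have e : (powMonoidHom p : Circle →* Circle).ker ≃ rootsOfUnity p Circle :=
    toUnits.toEquiv.subtypeEquiv fun z ↦ by
      rw [MonoidHom.mem_ker, mem_rootsOfUnity]
      exact (map_pow toUnits z p ▸ map_eq_one_iff toUnits toUnits.injective).symm
  rw [Nat.card_congr e, HasEnoughRootsOfUnity.natCard_rootsOfUnity]

variable (ι : Type*) [Fintype ι] (p : ℕ)

theorem card_ker_powMonoidHom_pi_circle [NeZero p] :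
    Nat.card (powMonoidHom p : (ι → Circle) →* (ι → Circle)).ker = p ^ Fintype.card ι := by
  have e : (powMonoidHom p : (ι → Circle) →* (ι → Circle)).ker ≃
      (ι → (powMonoidHom p : Circle →* Circle).ker) :=
    (Equiv.subtypeEquivRight fun _ ↦ funext_iff).trans
      (Equiv.subtypePiEquivPi (p := fun _ z ↦ z ∈ (powMonoidHom p : Circle →* Circle).ker))
  rw [Nat.card_congr e, Nat.card_fun, card_ker_powMonoidHom_circle, Nat.card_eq_fintype_card]

/-- The `p`-torsion of the standard maximal torus of the special unitary group. -/
noncomputable def specialTorusTorsion : Subgroup (ι → Circle) :=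
  (∏ i, Pi.evalMonoidHom (fun _ : ι ↦ Circle) i).ker ⊓ (powMonoidHom p).ker

variable {ι p}

theorem mem_specialTorusTorsion {d : ι → Circle} :
    d ∈ specialTorusTorsion ι p ↔ ∏ i, d i = 1 ∧ d ^ p = 1 := by
  rw [specialTorusTorsion, Subgroup.mem_inf, MonoidHom.mem_ker, MonoidHom.mem_ker,
    MonoidHom.finsetProd_apply]
  rfl

theorem map_prod_ker_powMonoidHom [Nonempty ι] :
    (powMonoidHom p : (ι → Circle) →* (ι → Circle)).ker.map
      (∏ i, Pi.evalMonoidHom (fun _ : ι ↦ Circle) i) = (powMonoidHom p : Circle →* Circle).ker := by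
  classical
  obtain ⟨i⟩ := ‹Nonempty ι›
  refine le_antisymm (Subgroup.map_le_iff_le_comap.mpr fun d hd ↦ ?_) fun z hz ↦
    ⟨Pi.mulSingle i z, ?_, ?_⟩
  · rw [Subgroup.mem_comap, MonoidHom.mem_ker, powMonoidHom_apply, ← map_pow,
      ← powMonoidHom_apply, MonoidHom.mem_ker.mp hd, map_one]
  · refine (Pi.mulSingle_pow (f := fun _ : ι ↦ Circle) i z p).symm.trans ?_
    rw [← powMonoidHom_apply, MonoidHom.mem_ker.mp hz, Pi.mulSingle_one]
  · rw [MonoidHom.finsetProd_apply]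
    exact Fintype.prod_pi_mulSingle' i z

theorem card_specialTorusTorsion_mul [Nonempty ι] [NeZero p] :
    Nat.card (specialTorusTorsion ι p) * p = p ^ Fintype.card ι := by
  let T := (powMonoidHom p : (ι → Circle) →* (ι → Circle)).ker
  have hindex : (specialTorusTorsion ι p).relIndex T = p := by
    rw [specialTorusTorsion, Subgroup.inf_relIndex_right, Subgroup.relIndex_ker,
      map_prod_ker_powMonoidHom, card_ker_powMonoidHom_circle]
  rw [← card_ker_powMonoidHom_pi_circle, ← Subgroup.relIndex_bot_left,
    ← Subgroup.relIndex_bot_left T]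
  nth_rw 2 [← hindex]
  exact Subgroup.relIndex_mul_relIndex _ _ _ bot_le inf_le_right

theorem finite_specialTorusTorsion [NeZero p] : Finite (specialTorusTorsion ι p) := by
  have : Finite (powMonoidHom p : (ι → Circle) →* (ι → Circle)).ker :=
    Nat.finite_of_card_ne_zero <| card_ker_powMonoidHom_pi_circle ι p ▸
      pow_ne_zero _ (NeZero.ne p)
  exact Finite.of_injective _ (Subgroup.inclusion_injective inf_le_right)

theorem exists_injective_specialTorusTorsion_SU (n p : ℕ) :
    ∃ φ : specialTorusTorsion (Fin n) p →* SU n, Function.Injective φ := by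
  let φ := (diagonalUnitary (Fin n)).comp (specialTorusTorsion (Fin n) p).subtype
  refine ⟨φ.codRestrict (SU n) fun d ↦ ?_, φ.injective_codRestrict _ _ |>.mpr <|
    diagonalUnitary_injective.comp Subtype.val_injective⟩
  rw [SU_eq_ker_circleDet, MonoidHom.mem_ker]
  exact (circleDet_diagonalUnitary _).trans (mem_specialTorusTorsion.mp d.2).1

theorem card_le_card_specialTorusTorsion {T : Type*} [CommGroup T] [NeZero p] {n : ℕ}
    (hT : ∀ t : T, t ^ p = 1) {f : T →* SU n} (hf : Function.Injective f) :
    Nat.card T ≤ Nat.card (specialTorusTorsion (Fin n) p) := by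
  let F := (SU n).subtype.comp f
  obtain ⟨V, hV⟩ := exists_conj_mem_range_diagonalUnitary F.range
  choose d hd using fun t ↦ hV (F t) ⟨t, rfl⟩
  have hmem (t : T) : d t ∈ specialTorusTorsion (Fin n) p := by
    refine mem_specialTorusTorsion.mpr ⟨?_, diagonalUnitary_injective ?_⟩
    · have hdet : circleDet (Fin n) (F t) = 1 :=
        MonoidHom.mem_ker.mp (SU_eq_ker_circleDet n ▸ (f t).2)
      have hconj := circleDet_conj V⁻¹ (F t)
      rwa [inv_inv, ← hd, circleDet_diagonalUnitary, hdet] at hconj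
    · have hconj := conj_pow (i := p) (a := V⁻¹) (b := F t)
      rwa [inv_inv, ← hd, ← map_pow, ← map_pow, hT, map_one, mul_one, inv_mul_cancel,
        ← map_one (diagonalUnitary (Fin n))] at hconj
  have := finite_specialTorusTorsion (ι := Fin n) (p := p)
  have hinj : Function.Injective F := Subtype.val_injective.comp hf
  refine Nat.card_le_card_of_injective (fun t ↦ (⟨d t, hmem t⟩ : specialTorusTorsion (Fin n) p))
    fun s t hst ↦ hinj ?_
  have hst' := congrArg (diagonalUnitary (Fin n)) (congrArg Subtype.val hst)
  simpa only [hd, mul_left_inj, mul_right_inj] using hst'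

end TorusTorsion

section Goursat

variable {E G H : Type*} [Group E] [Group G] [Group H]

theorem ker_le_center_of_map_le_center {f : E →* G} {g : E →* H}
    (hinj : Function.Injective (f.prod g)) (hf : g.ker.map f ≤ Subgroup.center G) :
    g.ker ≤ Subgroup.center E := by
  refine fun z hz ↦ Subgroup.mem_center_iff.mpr fun e ↦ hinj (Prod.ext ?_ ?_)
  · have hfz := hf (Subgroup.mem_map_of_mem f hz)
    simpa only [map_mul] using! Subgroup.mem_center_iff.mp hfz (f e)
  · simp [MonoidHom.mem_ker.mp hz]

theorem eq_top_of_goursatFst_eq_top {K : Subgroup (G × H)}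
    (hsnd : Function.Surjective (Prod.snd ∘ K.subtype)) (hK : K.goursatFst = ⊤) : K = ⊤ := by
  rw [Subgroup.eq_top_iff']
  rintro ⟨a, b⟩
  obtain ⟨⟨⟨c, _⟩, hc⟩, rfl⟩ := hsnd b
  have hac : (a * c⁻¹, 1) ∈ K := Subgroup.mem_goursatFst.mp (hK ▸ Subgroup.mem_top _)
  simpa using K.mul_mem hac hc

theorem eq_top_of_goursatSnd_eq_top {K : Subgroup (G × H)}
    (hfst : Function.Surjective (Prod.fst ∘ K.subtype)) (hK : K.goursatSnd = ⊤) : K = ⊤ := by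
  rw [Subgroup.eq_top_iff']
  rintro ⟨a, b⟩
  obtain ⟨⟨⟨_, c⟩, hc⟩, rfl⟩ := hfst a
  have hbc : (1, b * c⁻¹) ∈ K := Subgroup.mem_goursatSnd.mp (hK ▸ Subgroup.mem_top _)
  simpa using K.mul_mem hbc hc

variable {m n : ℕ}

theorem injective_of_pow_eq_one_of_map_ker_le_scalarSU {T : Type*} [Group T] {p : ℕ}
    {f : E →* G} {g : E →* SU n} (hg : f.ker.map g ≤ scalarSU n) (hnp : n.Coprime p)
    (hT : ∀ t : T, t ^ p = 1) {ψ : T →* E} (hψ : Function.Injective (g.comp ψ)) :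
    Function.Injective (f.comp ψ) := by
  refine (injective_iff_map_eq_one _).mpr fun t ht ↦ (injective_iff_map_eq_one _).mp hψ t ?_
  refine (pow_eq_one_iff_of_coprime hnp).mp ⟨?_, by rw [← map_pow, hT, map_one]⟩
  exact pow_eq_one_of_mem_scalarSU (hg (Subgroup.mem_map_of_mem g ht))

theorem le_of_map_ker_le_scalarSU [NeZero m] {f : E →* SU m} {g : E →* SU n}
    (hinj : Function.Injective (f.prod g)) (hsurj : Function.Surjective g)
    (hf : g.ker.map f ≤ scalarSU m) (hg : f.ker.map g ≤ scalarSU n) : n ≤ m := by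
  rcases eq_zero_or_neZero n with rfl | _
  · exact zero_le
  let p := m * n + 1
  have hmp : m.Coprime p := by simp [p]
  have hnp : n.Coprime p := by simp [p]
  have hT (t : specialTorusTorsion (Fin n) p) : t ^ p = 1 :=
    Subtype.ext (mem_specialTorusTorsion.mp t.2).2
  have hker (z : E) (hz : z ∈ g.ker) : z ^ m = 1 := by
    refine hinj (Prod.ext ?_ ?_)
    · simpa using! pow_eq_one_of_mem_scalarSU (hf (Subgroup.mem_map_of_mem f hz))
    · simp [MonoidHom.mem_ker.mp hz]
  obtain ⟨φ, hφ⟩ := exists_injective_specialTorusTorsion_SU n p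
  obtain ⟨ψ, rfl⟩ := exists_monoidHom_lift_of_coprime hsurj
    (ker_le_center_of_map_le_center hinj (hf.trans scalarSU_le_center)) hker hmp hT φ
  have hcard := card_le_card_specialTorusTorsion hT
    (injective_of_pow_eq_one_of_map_ker_le_scalarSU hg hnp hT hφ)
  have hpow := Nat.mul_le_mul_right p hcard
  rw [card_specialTorusTorsion_mul, card_specialTorusTorsion_mul, Fintype.card_fin,
    Fintype.card_fin] at hpow
  have hp : 1 < p := Nat.lt_add_of_pos_left (Nat.mul_pos (NeZero.pos m) (NeZero.pos n))
  exact (Nat.pow_le_pow_iff_right hp).mp hpow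

end Goursat

theorem stmt_4_general {m n : ℕ} (hmn : m ≠ n) (K : Subgroup (SU m × SU n))
    (hfst : K.map (MonoidHom.fst (SU m) (SU n)) = ⊤)
    (hsnd : K.map (MonoidHom.snd (SU m) (SU n)) = ⊤) : K = ⊤ := by
  let f := (MonoidHom.fst (SU m) (SU n)).comp K.subtype
  let g := (MonoidHom.snd (SU m) (SU n)).comp K.subtype
  have hf : Function.Surjective f := by
    rw [← MonoidHom.range_eq_top, MonoidHom.range_comp, K.range_subtype, hfst]
  have hg : Function.Surjective g := by
    rw [← MonoidHom.range_eq_top, MonoidHom.range_comp, K.range_subtype, hsnd]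
  have := K.normal_goursatFst hf
  have := K.normal_goursatSnd hg
  by_contra hK
  have hFst : K.goursatFst ≠ ⊤ := mt (eq_top_of_goursatFst_eq_top hg) hK
  have hSnd : K.goursatSnd ≠ ⊤ := mt (eq_top_of_goursatSnd_eq_top hf) hK
  have := neZero_of_ne_top hFst
  have := neZero_of_ne_top hSnd
  have hFst_le : K.goursatFst ≤ scalarSU m := le_scalarSU_of_ne_top hFst
  have hSnd_le : K.goursatSnd ≤ scalarSU n := le_scalarSU_of_ne_top hSnd
  refine hmn (le_antisymm ?_ ?_)
  · exact le_of_map_ker_le_scalarSU (f := g) (g := f)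
      (Prod.swap_injective.comp K.subtype_injective) hf hSnd_le hFst_le
  · exact le_of_map_ker_le_scalarSU (f := f) (g := g) K.subtype_injective hg hFst_le hSnd_le

/-- A closed subgroup of `SU(5) × SU(8)` surjecting onto both factors is the whole
group. -/
theorem stmt_4 (K : Subgroup (↥(SU 5) × ↥(SU 8)))
    (hclosed : IsClosed (K : Set (↥(SU 5) × ↥(SU 8))))
    (hsurj1 : K.map (MonoidHom.fst ↥(SU 5) ↥(SU 8)) = ⊤)
    (hsurj2 : K.map (MonoidHom.snd ↥(SU 5) ↥(SU 8)) = ⊤) :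
    K = ⊤ :=
  stmt_4_general (by norm_num) K hsurj1 hsurj2
end

section
/- Let $a_1, a_2, b_1, b_2$ be nonzero complex numbers with $a_1 \neq a_2$ and $b_1 \neq b_2$. If the set $\{a_1 b_1, a_1 b_2, a_2 b_1, a_2 b_2\}$ has exactly two elements $x$ and $y$, then $y = -x$ (the ratio of the two distinct products is $-1$). -/
/-!
Multiplication by `b₁` and by `b₂` both map `{a₁, a₂}` bijectively onto `{x, y}`. The two bijections
cannot agree, since `a₁ ≠ a₂` and `b₁ ≠ b₂`, so they are swapped: `a₁ b₁ = a₂ b₂` and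
`a₁ b₂ = a₂ b₁`. Adding these gives `(a₁ - a₂) (b₁ + b₂) = 0`, whence `b₁ + b₂ = 0`
and `x + y = a₁ b₁ + a₁ b₂ = 0`.
-/

theorem pair_eq_pair_of_subset_of_ne {α : Type*} {p q x y : α}
    (hsub : ({p, q} : Set α) ⊆ {x, y}) (hpq : p ≠ q) : ({p, q} : Set α) = {x, y} := by
  obtain ⟨hp, hq⟩ := Set.pair_subset_iff.mp hsub
  rw [Set.pair_eq_pair_iff]
  grind

section NoZeroDivisors

variable {R : Type*} [NonUnitalNonAssocRing R] [NoZeroDivisors R] {a₁ a₂ b₁ b₂ : R}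

theorem eq_of_mul_eq_mul_of_ne (ha : a₁ ≠ a₂) (h₁ : a₁ * b₁ = a₁ * b₂)
    (h₂ : a₂ * b₁ = a₂ * b₂) : b₁ = b₂ :=
  mul_left_cancel₀ (sub_ne_zero.mpr ha) (by rw [sub_mul, sub_mul, h₁, h₂])

theorem add_eq_zero_of_mul_eq_mul_swap (ha : a₁ ≠ a₂) (h₁ : a₁ * b₁ = a₂ * b₂)
    (h₂ : a₁ * b₂ = a₂ * b₁) : b₁ + b₂ = 0 := by
  have hmul : (a₁ - a₂) * (b₁ + b₂) = 0 := by
    rw [sub_mul, mul_add, mul_add, h₁, h₂, add_comm, sub_self]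
  exact (mul_eq_zero.mp hmul).resolve_left (sub_ne_zero.mpr ha)

theorem mul_eq_mul_swap_of_pair_eq_pair (ha : a₁ ≠ a₂) (hb : b₁ ≠ b₂)
    (h : ({a₁ * b₁, a₂ * b₁} : Set R) = {a₁ * b₂, a₂ * b₂}) :
    a₁ * b₁ = a₂ * b₂ ∧ a₂ * b₁ = a₁ * b₂ :=
  (Set.pair_eq_pair_iff.mp h).resolve_left
    fun ⟨h₁, h₂⟩ ↦ hb (eq_of_mul_eq_mul_of_ne ha h₁ h₂)

theorem stmt_9_general {x y : R} (hb₁ : b₁ ≠ 0) (hb₂ : b₂ ≠ 0) (ha : a₁ ≠ a₂) (hb : b₁ ≠ b₂)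
    (hsub : ({a₁ * b₁, a₁ * b₂, a₂ * b₁, a₂ * b₂} : Set R) ⊆ {x, y}) : y = -x := by
  have image_b₁ : ({a₁ * b₁, a₂ * b₁} : Set R) = {x, y} :=
    pair_eq_pair_of_subset_of_ne (subset_trans (by grind) hsub) ((mul_left_injective₀ hb₁).ne ha)
  have image_b₂ : ({a₁ * b₂, a₂ * b₂} : Set R) = {x, y} :=
    pair_eq_pair_of_subset_of_ne (subset_trans (by grind) hsub) ((mul_left_injective₀ hb₂).ne ha)
  obtain ⟨h₁, h₂⟩ := mul_eq_mul_swap_of_pair_eq_pair ha hb (image_b₁.trans image_b₂.symm)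
  have hadd : a₁ * b₁ + a₂ * b₁ = 0 := by
    rw [h₂, ← mul_add, add_eq_zero_of_mul_eq_mul_swap ha h₁ h₂.symm, mul_zero]
  obtain ⟨rfl, rfl⟩ | ⟨rfl, rfl⟩ := Set.pair_eq_pair_iff.mp image_b₁
  · exact eq_neg_of_add_eq_zero_right hadd
  · exact eq_neg_of_add_eq_zero_left hadd

end NoZeroDivisors

/-- If `a₁ ≠ a₂`, `b₁ ≠ b₂` are nonzero complex numbers and the four products
`aᵢbⱼ` take exactly two values `x ≠ y`, then `y = -x`. -/
theorem stmt_9 (a₁ a₂ b₁ b₂ : ℂ) (ha₁ : a₁ ≠ 0) (ha₂ : a₂ ≠ 0)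
    (hb₁ : b₁ ≠ 0) (hb₂ : b₂ ≠ 0) (ha : a₁ ≠ a₂) (hb : b₁ ≠ b₂)
    (x y : ℂ) (hxy : x ≠ y)
    (hset : ({a₁ * b₁, a₁ * b₂, a₂ * b₁, a₂ * b₂} : Set ℂ) = {x, y}) :
    y = -x :=
  stmt_9_general hb₁ hb₂ ha hb hset.subset
end

section
/- Let $q = e^{2\pi i/5}$, let $[3] = q + q^{-1} + 1$ (a positive real number), and define the $2 \times 2$ complex matrices $U_1 = \begin{pmatrix} -1 & 0 \\ 0 & q \end{pmatrix}$ and $U_2 = \begin{pmatrix} \frac{q^2}{q+1} & -\frac{q\sqrt{[3]}}{q+1} \\ -\frac{q\sqrt{[3]}}{q+1} & -\frac{1}{q+1} \end{pmatrix}$, where $\sqrt{[3]}$ is the positive real square root of $[3]$. Then $U_1 U_2 U_1 = U_2 U_1 U_2$, so $U_1, U_2$ define a representation of the braid group $B_3$. -/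
/-!
Both matrices have eigenvalues `q` and `-1`, so `q - U₁` and `q - U₂` are rank-one matrices, of
trace `q + 1`. Rank-one matrices `E`, `F` of the same trace `d` satisfy the Temperley–Lieb
relations `E² = d E`, `E F E = c E`, `F² = d F`, `F E F = c F` with `c = tr (E F)`. Under these
relations, `(a - E) (a - F) (a - E)` expands to an expression symmetric in `E` and `F` as soon as
`a² + c = d a`. Here `a = q`, `d = q + 1` and `c = q`.
-/

open Matrix

section TemperleyLieb

variable {R A : Type*} [CommRing R] [Ring A] [Algebra R A] {a c d : R} {E F : A}

theorem smul_one_sub_mul_mul_smul_one_sub (ha : a ^ 2 + c = d * a)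
    (hEE : E * E = d • E) (hEFE : E * F * E = c • E) :
    (a • 1 - E) * (a • 1 - F) * (a • 1 - E) =
      a ^ 3 • 1 - a ^ 2 • (E + F) + a • (E * F + F * E) := by
  have expand : (a • 1 - E) * (a • 1 - F) * (a • 1 - E) =
      a ^ 3 • 1 - a ^ 2 • (2 • E + F) + a • (E * E + E * F + F * E) - E * F * E := by
    simp only [sub_mul, mul_sub, smul_mul_assoc, mul_smul_comm, one_mul, mul_one]
    module
  rw [expand, hEE, hEFE, eq_sub_of_add_eq' ha]
  module

theorem smul_one_sub_braid (ha : a ^ 2 + c = d * a)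
    (hEE : E * E = d • E) (hFF : F * F = d • F)
    (hEFE : E * F * E = c • E) (hFEF : F * E * F = c • F) :
    (a • 1 - E) * (a • 1 - F) * (a • 1 - E) = (a • 1 - F) * (a • 1 - E) * (a • 1 - F) := by
  rw [smul_one_sub_mul_mul_smul_one_sub ha hEE hEFE,
    smul_one_sub_mul_mul_smul_one_sub ha hFF hFEF, add_comm E F, add_comm (E * F)]

end TemperleyLieb

section RankOne

variable {R n : Type*} [CommRing R] [Fintype n]

theorem vecMulVec_mul_vecMulVec_mul_vecMulVec (v w v' w' : n → R) :
    vecMulVec v w * vecMulVec v' w' * vecMulVec v w =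
      ((w ⬝ᵥ v') * (w' ⬝ᵥ v)) • vecMulVec v w := by
  simp only [vecMulVec_mul_vecMulVec, vecMulVec_smul, smul_mul, smul_smul]

theorem smul_one_sub_vecMulVec_braid [DecidableEq n] {a d : R} {v w v' w' : n → R}
    (hd : w ⬝ᵥ v = d) (hd' : w' ⬝ᵥ v' = d) (ha : a ^ 2 + (w ⬝ᵥ v') * (w' ⬝ᵥ v) = d * a) :
    (a • 1 - vecMulVec v w) * (a • 1 - vecMulVec v' w') * (a • 1 - vecMulVec v w) =
      (a • 1 - vecMulVec v' w') * (a • 1 - vecMulVec v w) * (a • 1 - vecMulVec v' w') := by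
  apply smul_one_sub_braid ha
  · rw [vecMulVec_mul_vecMulVec, hd, vecMulVec_smul]
  · rw [vecMulVec_mul_vecMulVec, hd', vecMulVec_smul]
  · exact vecMulVec_mul_vecMulVec_mul_vecMulVec v w v' w'
  · rw [vecMulVec_mul_vecMulVec_mul_vecMulVec, mul_comm (w' ⬝ᵥ v)]

end RankOne

section Jones

variable {K : Type*} [Field K] {q s : K}

theorem jones_matrix_one_eq_smul_one_sub_vecMulVec {R : Type*} [CommRing R] (q : R) :
    !![-1, 0; 0, q] = q • 1 - vecMulVec ![1, 0] ![q + 1, 0] := by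
  ext i j
  fin_cases i <;> fin_cases j <;> simp

theorem jones_matrix_two_eq_smul_one_sub_vecMulVec (hq : q ≠ 0) (hq1 : q + 1 ≠ 0)
    (hs : s ^ 2 = q + q⁻¹ + 1) :
    !![q ^ 2 / (q + 1), -(q * s) / (q + 1); -(q * s) / (q + 1), -1 / (q + 1)] =
      q • 1 - vecMulVec ![1, s] ![q / (q + 1), q * s / (q + 1)] := by
  have hqs : q * s ^ 2 = q ^ 2 + q + 1 := by
    rw [hs]
    field_simp
    ring
  have h₀₀ : q ^ 2 / (q + 1) = q - q / (q + 1) := by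
    field_simp
    ring
  have h₁₀ : -(q * s) / (q + 1) = -(s * (q / (q + 1))) := by ring
  have h₁₁ : -1 / (q + 1) = q - s * (q * s / (q + 1)) := by
    field_simp
    linear_combination hqs
  ext i j
  fin_cases i <;> fin_cases j
  · simpa using h₀₀
  · simp [neg_div]
  · simpa using h₁₀
  · simpa using h₁₁

theorem stmt_16_general (hq : q ≠ 0) (hq1 : q + 1 ≠ 0) (hs : s ^ 2 = q + q⁻¹ + 1)
    {U₁ U₂ : Matrix (Fin 2) (Fin 2) K}
    (hU₁ : U₁ = !![-1, 0; 0, q])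
    (hU₂ : U₂ = !![q ^ 2 / (q + 1), -(q * s) / (q + 1); -(q * s) / (q + 1), -1 / (q + 1)]) :
    U₁ * U₂ * U₁ = U₂ * U₁ * U₂ := by
  rw [hU₁, hU₂, jones_matrix_one_eq_smul_one_sub_vecMulVec,
    jones_matrix_two_eq_smul_one_sub_vecMulVec hq hq1 hs]
  apply smul_one_sub_vecMulVec_braid (d := q + 1)
  · simp
  · calc ![q / (q + 1), q * s / (q + 1)] ⬝ᵥ ![1, s] = q * (1 + s ^ 2) / (q + 1) := by
          simp only [vec2_dotProduct, cons_val_zero, cons_val_one]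
          ring
      _ = q + 1 := by
          rw [hs]
          field_simp
          ring
  · simp only [vec2_dotProduct, cons_val_zero, cons_val_one]
    field_simp
    ring

end Jones

theorem add_one_ne_zero_of_isPrimitiveRoot {R : Type*} [CommRing R] {ζ : R} {k : ℕ}
    (hζ : IsPrimitiveRoot ζ k) (hk : 2 < k) : ζ + 1 ≠ 0 := by
  intro h
  have hζ_sq : ζ ^ 2 = 1 := by rw [eq_neg_of_add_eq_zero_left h, neg_one_sq]
  exact hζ.pow_ne_one_of_pos_of_lt two_ne_zero hk hζ_sq

/-- The matrices of the Jones representation `ρ_{[2,1],β,3}` of the braid group `B₃`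
at the fifth root of unity satisfy the braid relation `U₁U₂U₁ = U₂U₁U₂`.
Here `q = e^{2πi/5}`, `[3] = q + q⁻¹ + 1`, and `s = √[3]` is the nonnegative real
square root of `[3]`. -/
theorem stmt_16 (q : ℂ) (hq : q = Complex.exp (2 * Real.pi * Complex.I / 5))
    (s : ℝ) (hs : 0 ≤ s) (hs2 : (s : ℂ) ^ 2 = q + q⁻¹ + 1)
    (U₁ U₂ : Matrix (Fin 2) (Fin 2) ℂ)
    (hU₁ : U₁ = !![-1, 0; 0, q])
    (hU₂ : U₂ = !![q ^ 2 / (q + 1), -(q * (s : ℂ)) / (q + 1);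
                   -(q * (s : ℂ)) / (q + 1), -1 / (q + 1)]) :
    U₁ * U₂ * U₁ = U₂ * U₁ * U₂ := by
  have hζ : IsPrimitiveRoot q 5 := hq ▸ Complex.isPrimitiveRoot_exp 5 (by norm_num)
  exact stmt_16_general (hζ.ne_zero (by norm_num))
    (add_one_ne_zero_of_isPrimitiveRoot hζ (by norm_num)) hs2 hU₁ hU₂
end
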